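/- arXiv:2105.06577 — 3 statements merged into one kernel-verified Lean document; each statement's English description precedes it below -/
import Mathlib

section
/- (Equivalence of Definition 1 and Definition 2 of persistent excitation for smooth regressors.) Let Φ : [t₀,∞) → ℝ^N be continuously differentiable with both Φ and Φ' bounded on [t₀,∞). Then the following are equivalent: (i) there exist T > 0 and α > 0 such that for all t ≥ t₀ the matrix ∫_t^{t+T} Φ(τ)Φ(τ)ᵀ dτ − αI is positive semidefinite; (ii) there exist constants T > 0, δ₀ ∈ (0, T] and ε₀ > 0 such that for every t ≥ t₀ and every unit vector w ∈ ℝ^N there exists t₂ with [t₂, t₂+δ₀] ⊆ [t, t+T] and (1/T)·|∫_{t₂}^{t₂+δ₀} Φ(τ)ᵀ w dτ| ≥ ε₀. -/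
open Matrix MeasureTheory Filter intervalIntegral

lemma pe_quad (N : ℕ) (Φ : ℝ → Fin N → ℝ) (a b α : ℝ) (hab : a ≤ b)
    (hc : ContinuousOn Φ (Set.Icc a b)) (x : Fin N → ℝ) :
    x ⬝ᵥ ((Matrix.of (fun i j => ∫ τ in a..b, Φ τ i * Φ τ j) -
        α • (1 : Matrix (Fin N) (Fin N) ℝ)) *ᵥ x) =
      (∫ τ in a..b, (Φ τ ⬝ᵥ x) ^ 2) - α * ∑ i, x i ^ 2 := by
  have hci : ∀ i, ContinuousOn (fun τ => Φ τ i) (Set.uIcc a b) := by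
    intro i
    rw [Set.uIcc_of_le hab]
    exact continuousOn_pi.1 hc i
  have h1 : (∫ τ in a..b, (Φ τ ⬝ᵥ x) ^ 2) =
      ∑ i, ∑ j, x i * ((∫ τ in a..b, Φ τ i * Φ τ j) * x j) := by
    have : ∀ τ, (Φ τ ⬝ᵥ x) ^ 2 = ∑ i, ∑ j, (x i * x j) * (Φ τ i * Φ τ j) := by
      intro τ
      rw [sq, dotProduct, Finset.sum_mul_sum]
      refine Finset.sum_congr rfl fun i _ => Finset.sum_congr rfl fun j _ => by ring
    simp_rw [this]
    have hI : ∀ i j, IntervalIntegrable (fun τ => (x i * x j) * (Φ τ i * Φ τ j)) volume a b :=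
      fun i j => (continuousOn_const.mul ((hci i).mul (hci j))).intervalIntegrable
    rw [intervalIntegral.integral_finsetSum]
    · refine Finset.sum_congr rfl fun i _ => ?_
      rw [intervalIntegral.integral_finsetSum (fun j _ => hI i j)]
      refine Finset.sum_congr rfl fun j _ => ?_
      rw [intervalIntegral.integral_const_mul]
      ring
    · intro i _
      refine ContinuousOn.intervalIntegrable ?_
      exact continuousOn_finsetSum _ fun j _ => (continuousOn_const.mul ((hci i).mul (hci j)))
  rw [h1, Matrix.sub_mulVec, dotProduct_sub, Matrix.smul_mulVec, Matrix.one_mulVec,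
    dotProduct_smul]
  simp only [dotProduct, Matrix.mulVec, Matrix.of_apply, Finset.mul_sum, smul_eq_mul, sq]

lemma pe_psd_iff (N : ℕ) (Φ : ℝ → Fin N → ℝ) (a b α : ℝ) (hab : a ≤ b)
    (hc : ContinuousOn Φ (Set.Icc a b)) :
    (Matrix.of (fun i j => ∫ τ in a..b, Φ τ i * Φ τ j) -
        α • (1 : Matrix (Fin N) (Fin N) ℝ)).PosSemidef ↔
      ∀ w : Fin N → ℝ, Real.sqrt (∑ i, w i ^ 2) = 1 → α ≤ ∫ τ in a..b, (Φ τ ⬝ᵥ w) ^ 2 := by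
  constructor
  · intro h w hw
    have h2 := h.dotProduct_mulVec_nonneg w
    rw [star_trivial, pe_quad N Φ a b α hab hc w, Real.sqrt_eq_one.1 hw] at h2
    linarith
  · intro h
    refine Matrix.PosSemidef.of_dotProduct_mulVec_nonneg ?_ ?_
    · ext i j
      simp only [Matrix.conjTranspose_apply, Matrix.sub_apply, Matrix.of_apply, Matrix.smul_apply,
        star_trivial, Matrix.one_apply, eq_comm (a := i) (b := j), mul_comm (Φ _ j) (Φ _ i)]
    · intro x
      rw [star_trivial, pe_quad N Φ a b α hab hc x]
      have hs : 0 ≤ ∑ i, x i ^ 2 := Finset.sum_nonneg fun i _ => sq_nonneg _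
      rcases hs.eq_or_lt with h0 | h0
      · rw [← h0, mul_zero, sub_zero]
        exact intervalIntegral.integral_nonneg hab fun _ _ => sq_nonneg _
      · set s := ∑ i, x i ^ 2 with hsd
        have hr : 0 < Real.sqrt s := Real.sqrt_pos.2 h0
        have hr2 : Real.sqrt s ^ 2 = s := Real.sq_sqrt hs
        have h3 := h ((Real.sqrt s)⁻¹ • x) (by
          rw [Real.sqrt_eq_one]
          simp only [Pi.smul_apply, smul_eq_mul, mul_pow, ← Finset.mul_sum, inv_pow, hr2]
          exact inv_mul_cancel₀ h0.ne')
        simp only [dotProduct_smul, smul_eq_mul, mul_pow, inv_pow, hr2,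
          intervalIntegral.integral_const_mul] at h3
        rw [inv_mul_eq_div, le_div_iff₀ h0] at h3
        linarith

lemma pe_cs (f : ℝ → ℝ) (a d : ℝ) (hd : 0 < d) (hf : ContinuousOn f (Set.Icc a (a + d))) :
    (∫ τ in a..(a + d), f τ) ^ 2 / d ≤ ∫ τ in a..(a + d), f τ ^ 2 := by
  have hab : a ≤ a + d := by linarith
  have hf' : ContinuousOn f (Set.uIcc a (a + d)) := by rwa [Set.uIcc_of_le hab]
  set I := ∫ τ in a..(a + d), f τ with hI
  have h0 : 0 ≤ ∫ τ in a..(a + d), (f τ ^ 2 - (2 * (I / d)) * f τ + (I / d) ^ 2) :=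
    intervalIntegral.integral_nonneg hab fun u _ => by nlinarith [sq_nonneg (f u - I / d)]
  rw [intervalIntegral.integral_add, intervalIntegral.integral_sub,
    intervalIntegral.integral_const_mul, intervalIntegral.integral_const, ← hI, smul_eq_mul] at h0
  · have : I ^ 2 / d = 2 * (I / d) * I - (a + d - a) * (I / d) ^ 2 := by
      field_simp
      ring
    linarith
  · exact (hf'.pow 2).intervalIntegrable
  · exact (continuousOn_const.mul hf').intervalIntegrable
  · exact ((hf'.pow 2).sub (continuousOn_const.mul hf')).intervalIntegrable
  · simp

lemma pe_dot_abs (N : ℕ) (v w : Fin N → ℝ) (hw : Real.sqrt (∑ i, w i ^ 2) = 1) :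
    |v ⬝ᵥ w| ≤ Real.sqrt (∑ i, v i ^ 2) := by
  apply Real.abs_le_sqrt
  have := Finset.sum_mul_sq_le_sq_mul_sq Finset.univ v w
  rw [Real.sqrt_eq_one.1 hw, mul_one] at this
  exact this



/-- Equivalence of Definition 1 and Definition 2 of persistent
excitation for smooth regressors. For a continuously differentiable `Φ` with `Φ`
and `Φ'` bounded, the matrix (Definition 1) form of persistent excitation is
equivalent to the subinterval (Definition 2) form. -/
theorem pe_def1_def2_equiv
    (N : ℕ) (t₀ : ℝ) (Φ Φ' : ℝ → Fin N → ℝ)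
    (hΦdiff : ∀ t ∈ Set.Ici t₀, HasDerivAt Φ (Φ' t) t)
    (hΦ'cont : ContinuousOn Φ' (Set.Ici t₀))
    (hΦbdd : ∃ C, ∀ t ∈ Set.Ici t₀, Real.sqrt (∑ i, Φ t i ^ 2) ≤ C)
    (hΦ'bdd : ∃ C, ∀ t ∈ Set.Ici t₀, Real.sqrt (∑ i, Φ' t i ^ 2) ≤ C) :
    (∃ T > (0 : ℝ), ∃ α > (0 : ℝ), ∀ t ∈ Set.Ici t₀,
      (Matrix.of (fun i j => ∫ τ in t..(t + T), Φ τ i * Φ τ j) -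
        α • (1 : Matrix (Fin N) (Fin N) ℝ)).PosSemidef) ↔
    (∃ T > (0 : ℝ), ∃ δ₀, 0 < δ₀ ∧ δ₀ ≤ T ∧ ∃ ε₀ > (0 : ℝ),
      ∀ t ∈ Set.Ici t₀, ∀ w : Fin N → ℝ, Real.sqrt (∑ i, w i ^ 2) = 1 →
        ∃ t₂, t ≤ t₂ ∧ t₂ + δ₀ ≤ t + T ∧
          ε₀ ≤ (1 / T) * |∫ τ in t₂..(t₂ + δ₀), Φ τ ⬝ᵥ w|) := by
  have hc : ContinuousOn Φ (Set.Ici t₀) := fun t ht => (hΦdiff t ht).continuousAt.continuousWithinAt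
  have hcI : ∀ a b, t₀ ≤ a → ContinuousOn Φ (Set.Icc a b) := fun a b ha =>
    hc.mono fun x hx => le_trans ha hx.1
  have hcw : ∀ w : Fin N → ℝ, ∀ a b, t₀ ≤ a → ContinuousOn (fun τ => Φ τ ⬝ᵥ w) (Set.Icc a b) := by
    intro w a b ha
    unfold dotProduct
    exact continuousOn_finsetSum _ fun i _ =>
      (continuousOn_pi.1 (hcI a b ha) i).mul continuousOn_const
  constructor
  · rintro ⟨T, hT, α, hα, h⟩
    obtain ⟨C, hC⟩ := hΦ'bdd
    set L := max C 1 with hL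
    have hL0 : 0 < L := lt_of_lt_of_le one_pos (le_max_right _ _)
    set s := Real.sqrt (α / T) with hs
    have hs0 : 0 < s := Real.sqrt_pos.2 (div_pos hα hT)
    set δ := min (T / 2) (s / (2 * L)) with hδ
    have hδ0 : 0 < δ := lt_min (by positivity) (by positivity)
    have hδT : δ ≤ T / 2 := min_le_left _ _
    have hδL : L * δ ≤ s / 2 := by
      have : δ ≤ s / (2 * L) := min_le_right _ _
      calc L * δ ≤ L * (s / (2 * L)) := by gcongr
        _ = s / 2 := by field_simp
    refine ⟨T, hT, δ, hδ0, by linarith, (1 / T) * (δ * s / 2), by positivity, ?_⟩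
    intro t ht w hw
    have ht' : t₀ ≤ t := ht
    have htT : t ≤ t + T := by linarith
    have hint := (pe_psd_iff N Φ t (t + T) α htT (hcI _ _ ht')).1 (h t ht) w hw
    have hex : ∃ p ∈ Set.Icc t (t + T), s ≤ |Φ p ⬝ᵥ w| := by
      obtain ⟨p, hp, hmax⟩ := (isCompact_Icc (a := t) (b := t + T)).exists_isMaxOn
        ⟨t, Set.left_mem_Icc.2 htT⟩ ((hcw w t (t + T) ht').pow 2)
      refine ⟨p, hp, ?_⟩
      rw [hs, ← Real.sqrt_sq_eq_abs]
      apply Real.sqrt_le_sqrt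
      have hle : (∫ τ in t..(t + T), (Φ τ ⬝ᵥ w) ^ 2) ≤ ∫ τ in t..(t + T), (Φ p ⬝ᵥ w) ^ 2 := by
        apply intervalIntegral.integral_mono_on htT
        · apply ContinuousOn.intervalIntegrable
          rw [Set.uIcc_of_le htT]
          exact (hcw w t (t + T) ht').pow 2
        · simp
        · intro x hx
          exact hmax hx
      rw [intervalIntegral.integral_const, smul_eq_mul] at hle
      rw [div_le_iff₀ hT]
      linarith
    obtain ⟨p, hp, hps⟩ := hex
    have hder : ∀ x ∈ Set.Ici t₀, HasDerivWithinAt (fun τ => Φ τ ⬝ᵥ w) (Φ' x ⬝ᵥ w) (Set.Ici t₀) x := by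
      intro x hx
      unfold dotProduct
      exact (HasDerivAt.fun_sum fun i _ =>
        ((hasDerivAt_pi.1 (hΦdiff x hx) i).mul_const (w i))).hasDerivWithinAt
    have hlip : ∀ x ∈ Set.Ici t₀, |Φ x ⬝ᵥ w - Φ p ⬝ᵥ w| ≤ L * |x - p| := by
      intro x hx
      exact (convex_Ici t₀).norm_image_sub_le_of_norm_hasDerivWithin_le hder
        (fun y hy => ((pe_dot_abs N _ w hw).trans (hC y hy)).trans (le_max_left _ _))
        (le_trans ht' hp.1) hx
    have hex2 : ∃ t₂, t ≤ t₂ ∧ t₂ + δ ≤ t + T ∧ t₂ ≤ p ∧ p ≤ t₂ + δ := by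
      by_cases hq : p + δ ≤ t + T
      · exact ⟨p, hp.1, hq, le_rfl, by linarith⟩
      · exact ⟨p - δ, by linarith, by linarith [hp.2], by linarith, by linarith⟩
    obtain ⟨t₂, h1, h2, h3, h4⟩ := hex2
    refine ⟨t₂, h1, h2, ?_⟩
    have hab : t₂ ≤ t₂ + δ := by linarith
    have hb : ‖∫ τ in t₂..(t₂ + δ), (Φ τ ⬝ᵥ w - Φ p ⬝ᵥ w)‖ ≤ (s / 2) * |t₂ + δ - t₂| := by
      apply intervalIntegral.norm_integral_le_of_norm_le_const
      intro x hx
      rw [Set.uIoc_of_le hab] at hx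
      have hx0 : t₀ ≤ x := by linarith [hx.1]
      refine (hlip x hx0).trans (le_trans ?_ hδL)
      gcongr
      rw [abs_le]
      constructor <;> linarith [hx.1, hx.2]
    rw [intervalIntegral.integral_sub, intervalIntegral.integral_const, add_sub_cancel_left,
      abs_of_pos hδ0, smul_eq_mul, Real.norm_eq_abs] at hb
    · have h5 := abs_sub_abs_le_abs_sub (δ * (Φ p ⬝ᵥ w)) (∫ τ in t₂..(t₂ + δ), Φ τ ⬝ᵥ w)
      rw [abs_sub_comm, abs_mul, abs_of_pos hδ0] at h5
      have h6 : δ * s ≤ δ * |Φ p ⬝ᵥ w| := by gcongr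
      gcongr
      linarith
    · apply ContinuousOn.intervalIntegrable
      rw [Set.uIcc_of_le hab]
      exact hcw w _ _ (by linarith)
    · simp
  · rintro ⟨T, hT, δ, hδ0, hδT, ε, hε, h⟩
    refine ⟨T, hT, (T * ε) ^ 2 / δ, by positivity, ?_⟩
    intro t ht
    have ht' : t₀ ≤ t := ht
    have htT : t ≤ t + T := by linarith
    rw [pe_psd_iff N Φ t (t + T) _ htT (hcI _ _ ht')]
    intro w hw
    obtain ⟨t₂, h1, h2, h3⟩ := h t ht w hw
    rw [one_div, inv_mul_eq_div, le_div_iff₀ hT] at h3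
    calc (T * ε) ^ 2 / δ ≤ (∫ τ in t₂..(t₂ + δ), Φ τ ⬝ᵥ w) ^ 2 / δ := by
          rw [← sq_abs (∫ τ in t₂..(t₂ + δ), Φ τ ⬝ᵥ w)]
          gcongr
          linarith
      _ ≤ ∫ τ in t₂..(t₂ + δ), (Φ τ ⬝ᵥ w) ^ 2 :=
          pe_cs (fun τ => Φ τ ⬝ᵥ w) t₂ δ hδ0 (hcw w _ _ (by linarith))
      _ ≤ ∫ τ in t..(t + T), (Φ τ ⬝ᵥ w) ^ 2 := by
          apply intervalIntegral.integral_mono_interval h1 (by linarith) h2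
          · exact Eventually.of_forall fun _ => sq_nonneg _
          · apply ContinuousOn.intervalIntegrable
            rw [Set.uIcc_of_le htT]
            exact (hcw w t (t + T) ht').pow 2
end

section
/- (Theorem 4, constant regret.) Along any solution of the high-order-tuner error model, the regret R(T) = ∫_0^T e(τ)ᵀ Q e(τ) dτ satisfies R(T) ≤ 2V(0) for every T > 0, where V(t) = (1/γ)Tr[(Ξ(t)−Θ)ᵀ Λ (Ξ(t)−Θ)] + (1/γ)Tr[(Θ̂(t)−Ξ(t))ᵀ Λ (Θ̂(t)−Ξ(t))] + e(t)ᵀ P e(t); in particular the regret is bounded independently of T. -/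
open Matrix MeasureTheory Filter

lemma hot_quad_deriv {k : ℕ} (S : Matrix (Fin k) (Fin k) ℝ) (hS : Sᵀ = S)
    (x : ℝ → Fin k → ℝ) (x' : Fin k → ℝ) (t : ℝ) (hx : HasDerivAt x x' t) :
    HasDerivAt (fun s => x s ⬝ᵥ S *ᵥ x s) (2 * (x t ⬝ᵥ S *ᵥ x')) t := by
  have hx1 := hasDerivAt_pi.1 hx
  have h : HasDerivAt (fun s => ∑ i, x s i * ∑ j, S i j * x s j)
      (∑ i, (x' i * (∑ j, S i j * x t j) + x t i * ∑ j, S i j * x' j)) t := by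
    apply HasDerivAt.fun_sum
    intro i _
    apply (hx1 i).mul
    apply HasDerivAt.fun_sum
    intro j _
    exact (hx1 j).const_mul _
  have h2 : x' ⬝ᵥ S *ᵥ x t = x t ⬝ᵥ S *ᵥ x' := by
    rw [dotProduct_mulVec, ← mulVec_transpose, hS, dotProduct_comm]
  have h3 : (2 * (x t ⬝ᵥ S *ᵥ x')) =
      (∑ i, (x' i * (∑ j, S i j * x t j) + x t i * ∑ j, S i j * x' j)) := by
    rw [two_mul]
    nth_rewrite 1 [← h2]
    rw [Finset.sum_add_distrib]
    rfl
  rw [h3]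
  exact h

lemma hot_trace {k l : ℕ} (S : Matrix (Fin k) (Fin k) ℝ) (X : Matrix (Fin k) (Fin l) ℝ) :
    (Xᵀ * S * X).trace = ∑ j, (fun i => X i j) ⬝ᵥ S *ᵥ (fun i => X i j) := by
  rw [Matrix.mul_assoc]
  rfl

lemma hot_frob {k l : ℕ} (M : Matrix (Fin k) (Fin l) ℝ) (v : Fin l → ℝ) :
    M *ᵥ v ⬝ᵥ M *ᵥ v ≤ (∑ i, ∑ j, M i j ^ 2) * (v ⬝ᵥ v) := by
  rw [Finset.sum_mul]
  apply Finset.sum_le_sum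
  intro i _
  have := Finset.sum_mul_sq_le_sq_mul_sq Finset.univ (M i) v
  simp only [mulVec, dotProduct, ← pow_two] at *
  exact this

lemma hot_psd {k : ℕ} {S : Matrix (Fin k) (Fin k) ℝ} (hS : S.PosSemidef) (x : Fin k → ℝ) :
    0 ≤ x ⬝ᵥ S *ᵥ x := by
  simpa using hS.dotProduct_mulVec_nonneg x

lemma hot_sym {k : ℕ} {S : Matrix (Fin k) (Fin k) ℝ} (hS : S.PosSemidef) : Sᵀ = S := by
  simpa using hS.1.eq

lemma hot_norm {k : ℕ} {S : Matrix (Fin k) (Fin k) ℝ}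
    (h : ‖Matrix.toEuclideanCLM (𝕜 := ℝ) S‖ ≤ 1) (u : Fin k → ℝ) :
    u ⬝ᵥ S *ᵥ u ≤ u ⬝ᵥ u := by
  have h1 := real_inner_le_norm (WithLp.toLp 2 u) (Matrix.toEuclideanCLM (𝕜 := ℝ) S (WithLp.toLp 2 u))
  have h2 := (Matrix.toEuclideanCLM (𝕜 := ℝ) S).le_of_opNorm_le h (WithLp.toLp 2 u)
  have h3 : inner ℝ (WithLp.toLp 2 u) (WithLp.toLp 2 u) = u ⬝ᵥ u := by
    rw [EuclideanSpace.inner_eq_star_dotProduct]; simp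
  have h4 : inner ℝ (WithLp.toLp 2 u) (Matrix.toEuclideanCLM (𝕜 := ℝ) S (WithLp.toLp 2 u))
      = u ⬝ᵥ S *ᵥ u := by
    simp [EuclideanSpace.inner_eq_star_dotProduct, dotProduct_comm]
  rw [real_inner_self_eq_norm_sq] at h3
  rw [h4] at h1
  rw [← h3]
  nlinarith [norm_nonneg (WithLp.toLp 2 u)]

lemma hot_contr {k : ℕ} {S : Matrix (Fin k) (Fin k) ℝ} (hS : S.PosSemidef)
    (h : ‖Matrix.toEuclideanCLM (𝕜 := ℝ) S‖ ≤ 1) (y : Fin k → ℝ) :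
    S *ᵥ y ⬝ᵥ S *ᵥ y ≤ y ⬝ᵥ S *ᵥ y := by
  have h1 := hot_psd hS (y - S *ᵥ y)
  have h2 := hot_norm h (S *ᵥ y)
  have h3 : y ⬝ᵥ S *ᵥ (S *ᵥ y) = S *ᵥ y ⬝ᵥ S *ᵥ y := by
    rw [dotProduct_mulVec, ← mulVec_transpose, hot_sym hS]
  rw [mulVec_sub, sub_dotProduct, dotProduct_sub, dotProduct_sub, h3] at h1
  linarith

lemma hot_cs {k l : ℕ} {S : Matrix (Fin k) (Fin k) ℝ} (hS : S.PosSemidef)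
    (D : Matrix (Fin k) (Fin l) ℝ) (v : Fin l → ℝ) :
    (D *ᵥ v) ⬝ᵥ S *ᵥ (D *ᵥ v) ≤ (Dᵀ * S * D).trace * (v ⬝ᵥ v) := by
  obtain ⟨R, hR⟩ : ∃ R : Matrix (Fin k) (Fin k) ℝ, S = Rᵀ * R := by
    open scoped MatrixOrder Matrix.Norms.L2Operator in
    obtain ⟨R, hR⟩ := CStarAlgebra.nonneg_iff_eq_star_mul_self.1 hS.nonneg
    exact ⟨R, by simpa [star_eq_conjTranspose] using hR⟩
  have h := hot_frob (R * D) v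
  have h1 : (Dᵀ * S * D).trace = ∑ i, ∑ j, (R * D) i j ^ 2 := by
    rw [hR, show Dᵀ * (Rᵀ * R) * D = (R * D)ᵀ * (R * D) by
      rw [transpose_mul]; simp only [Matrix.mul_assoc], Finset.sum_comm]
    refine Finset.sum_congr rfl fun j _ => ?_
    rw [diag_apply, Matrix.mul_apply]
    refine Finset.sum_congr rfl fun i _ => ?_
    rw [transpose_apply, pow_two]
  have h2 : (D *ᵥ v) ⬝ᵥ S *ᵥ (D *ᵥ v) = (R * D) *ᵥ v ⬝ᵥ (R * D) *ᵥ v := by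
    rw [hR, ← mulVec_mulVec, dotProduct_mulVec, vecMul_transpose, mulVec_mulVec]
  rw [h1, h2]
  exact h

lemma hot_colsum {k l : ℕ} (X : Matrix (Fin k) (Fin l) ℝ) (v : Fin l → ℝ) (z : Fin k → ℝ) :
    ∑ j, v j * ((fun i => X i j) ⬝ᵥ z) = (X *ᵥ v) ⬝ᵥ z := by
  simp only [dotProduct, mulVec, Finset.mul_sum, Finset.sum_mul]
  rw [Finset.sum_comm]
  refine Finset.sum_congr rfl fun i _ => Finset.sum_congr rfl fun j _ => by ring

/-- Theorem 4, constant regret. Along any solution of the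
high-order-tuner error model, the regret `R(T) = ∫_0^T eᵀQe` satisfies `R(T) ≤ 2V(0)`
for every `T > 0`, where `V` is the high-order-tuner Lyapunov function; in particular
the regret is bounded independently of `T`. -/
theorem hot_constant_regret
    (n m N : ℕ)
    (AH : Matrix (Fin n) (Fin n) ℝ) (B : Matrix (Fin n) (Fin m) ℝ)
    (Q P : Matrix (Fin n) (Fin n) ℝ)
    (hQ : Q.PosDef) (hP : P.PosDef)
    (hLyap : AHᵀ * P + P * AH = -Q)
    (hQ2 : (Q - (2 : ℝ) • 1).PosSemidef)
    (Λ : Matrix (Fin m) (Fin m) ℝ) (hΛ : Λ.PosDef)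
    (hΛnorm : ‖Matrix.toEuclideanCLM (𝕜 := ℝ) Λ‖ ≤ 1)
    (Θ : Matrix (Fin m) (Fin N) ℝ)
    (γ β μ : ℝ) (hγ : 0 < γ) (hβ : 0 < β)
    (hμ : (2 * γ / β) * ∑ i, ∑ j, ((P * B) i j) ^ 2 ≤ μ)
    (Φ : ℝ → Fin N → ℝ) (hΦ : ContinuousOn Φ (Set.Ici 0))
    (e : ℝ → Fin n → ℝ) (Θh Ξ : ℝ → Matrix (Fin m) (Fin N) ℝ)
    (he : ∀ t ∈ Set.Ici (0 : ℝ),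
      HasDerivAt e (AH.mulVec (e t) + (B * Λ * (Θh t - Θ)).mulVec (Φ t)) t)
    (hΞ : ∀ t ∈ Set.Ici (0 : ℝ), ∀ i j,
      HasDerivAt (fun s => Ξ s i j) (-γ * ((Bᵀ * P).mulVec (e t) i * Φ t j)) t)
    (hΘh : ∀ t ∈ Set.Ici (0 : ℝ), ∀ i j,
      HasDerivAt (fun s => Θh s i j)
        (-β * (Θh t i j - Ξ t i j) * (1 + μ * (Φ t ⬝ᵥ Φ t))) t) :
    ∀ T > (0 : ℝ),
      (∫ τ in (0 : ℝ)..T, e τ ⬝ᵥ Q.mulVec (e τ)) ≤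
        2 * ((1 / γ) * ((Ξ 0 - Θ)ᵀ * Λ * (Ξ 0 - Θ)).trace +
          (1 / γ) * ((Θh 0 - Ξ 0)ᵀ * Λ * (Θh 0 - Ξ 0)).trace +
          e 0 ⬝ᵥ P.mulVec (e 0)) := by
  have hΛp := hΛ.posSemidef
  have hΛs := hot_sym hΛp
  have hPs := hot_sym hP.posSemidef
  set V : ℝ → ℝ := fun t => (1 / γ) * ((Ξ t - Θ)ᵀ * Λ * (Ξ t - Θ)).trace +
          (1 / γ) * ((Θh t - Ξ t)ᵀ * Λ * (Θh t - Ξ t)).trace +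
          e t ⬝ᵥ P.mulVec (e t) with hV
  have trnn : ∀ X : Matrix (Fin m) (Fin N) ℝ, 0 ≤ (Xᵀ * Λ * X).trace := by
    intro X
    rw [hot_trace]
    exact Finset.sum_nonneg fun j _ => hot_psd hΛp _
  have hVnn : ∀ t, 0 ≤ V t := by
    intro t
    have h1 := trnn (Ξ t - Θ)
    have h2 := trnn (Θh t - Ξ t)
    have h3 := hot_psd hP.posSemidef (e t)
    simp only [hV]
    positivity
  have hVd : ∀ t ∈ Set.Ici (0 : ℝ), ∃ d, HasDerivAt V d t ∧
      d ≤ -(1 / 2) * (e t ⬝ᵥ Q *ᵥ e t) := by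
    intro t ht
    set w := (Bᵀ * P) *ᵥ e t with hw
    set X := Ξ t - Θ with hX
    set D := Θh t - Ξ t with hD
    set c := 1 + μ * (Φ t ⬝ᵥ Φ t) with hc
    have d1 : HasDerivAt (fun s => ((Ξ s - Θ)ᵀ * Λ * (Ξ s - Θ)).trace)
        (∑ j, 2 * ((fun i => X i j) ⬝ᵥ Λ *ᵥ ((-γ * Φ t j) • w))) t := by
      simp only [hot_trace]
      apply HasDerivAt.fun_sum
      intro j _
      apply hot_quad_deriv Λ hΛs (fun s i => (Ξ s - Θ) i j)
      rw [hasDerivAt_pi]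
      intro i
      have := (hΞ t ht i j).sub_const (Θ i j)
      refine this.congr_deriv ?_
      simp only [Pi.smul_apply, smul_eq_mul]
      ring
    have d2 : HasDerivAt (fun s => ((Θh s - Ξ s)ᵀ * Λ * (Θh s - Ξ s)).trace)
        (∑ j, 2 * ((fun i => D i j) ⬝ᵥ Λ *ᵥ ((-β * c) • (fun i => D i j) + (γ * Φ t j) • w))) t := by
      simp only [hot_trace]
      apply HasDerivAt.fun_sum
      intro j _
      apply hot_quad_deriv Λ hΛs (fun s i => (Θh s - Ξ s) i j)
      rw [hasDerivAt_pi]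
      intro i
      have := (hΘh t ht i j).sub (hΞ t ht i j)
      refine this.congr_deriv ?_
      simp only [Pi.smul_apply, Pi.add_apply, smul_eq_mul, hD, Matrix.sub_apply, hc, hw]
      ring
    have d3 := hot_quad_deriv P hPs e _ t (he t ht)
    have s1 : (∑ j, 2 * ((fun i => X i j) ⬝ᵥ Λ *ᵥ ((-γ * Φ t j) • w)))
        = -2 * γ * ((X *ᵥ Φ t) ⬝ᵥ Λ *ᵥ w) := by
      rw [← hot_colsum, Finset.mul_sum]
      refine Finset.sum_congr rfl fun j _ => ?_
      rw [mulVec_smul, dotProduct_smul, smul_eq_mul]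
      ring
    have s2 : (∑ j, 2 * ((fun i => D i j) ⬝ᵥ Λ *ᵥ ((-β * c) • (fun i => D i j) + (γ * Φ t j) • w)))
        = -2 * β * c * (Dᵀ * Λ * D).trace + 2 * γ * ((D *ᵥ Φ t) ⬝ᵥ Λ *ᵥ w) := by
      rw [← hot_colsum, hot_trace, Finset.mul_sum, Finset.mul_sum, ← Finset.sum_add_distrib]
      refine Finset.sum_congr rfl fun j _ => ?_
      rw [mulVec_add, mulVec_smul, mulVec_smul, dotProduct_add, dotProduct_smul, dotProduct_smul,
        smul_eq_mul, smul_eq_mul]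
      ring
    have swap : ∀ y, e t ⬝ᵥ P *ᵥ (B * Λ) *ᵥ y = y ⬝ᵥ Λ *ᵥ w := by
      intro y
      rw [mulVec_mulVec, dotProduct_mulVec, ← mulVec_transpose, dotProduct_comm]
      rw [hw, mulVec_mulVec, transpose_mul, transpose_mul, hΛs, hPs, Matrix.mul_assoc]
    have hlyapq : 2 * (e t ⬝ᵥ P *ᵥ AH *ᵥ e t) = -(e t ⬝ᵥ Q *ᵥ e t) := by
      have h1 : e t ⬝ᵥ (AHᵀ * P) *ᵥ e t = e t ⬝ᵥ (P * AH) *ᵥ e t := by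
        rw [dotProduct_mulVec, ← mulVec_transpose, dotProduct_comm, transpose_mul,
          transpose_transpose, hPs]
      have h2 : e t ⬝ᵥ (AHᵀ * P + P * AH) *ᵥ e t = -(e t ⬝ᵥ Q *ᵥ e t) := by
        rw [hLyap, neg_mulVec, dotProduct_neg]
      rw [add_mulVec, dotProduct_add, h1] at h2
      rw [mulVec_mulVec]
      linarith
    have s3 : 2 * (e t ⬝ᵥ P *ᵥ (AH *ᵥ e t + (B * Λ * (Θh t - Θ)) *ᵥ Φ t)) =
        -(e t ⬝ᵥ Q *ᵥ e t) + 2 * ((X *ᵥ Φ t) ⬝ᵥ Λ *ᵥ w) + 2 * ((D *ᵥ Φ t) ⬝ᵥ Λ *ᵥ w) := by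
      have hXD : Θh t - Θ = X + D := by rw [hX, hD]; abel
      rw [hXD, ← mulVec_mulVec, add_mulVec, mulVec_add, dotProduct_add, mul_add, hlyapq, swap,
        add_dotProduct]
      ring
    refine ⟨_, ((d1.const_mul (1 / γ)).add (d2.const_mul (1 / γ))).add d3, ?_⟩
    rw [s1, s2, s3]
    set F := ∑ i, ∑ j, ((P * B) i j) ^ 2 with hF
    set y := D *ᵥ Φ t with hy
    set τ := (Dᵀ * Λ * D).trace with hτ
    set φ := Φ t ⬝ᵥ Φ t with hφ
    set q := e t ⬝ᵥ Q *ᵥ e t with hq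
    have hFnn : 0 ≤ F := by positivity
    have hτnn : 0 ≤ τ := trnn D
    have hφnn : 0 ≤ φ := Finset.sum_nonneg fun i _ => mul_self_nonneg _
    have i1 : y ⬝ᵥ Λ *ᵥ y ≤ τ * φ := hot_cs hΛp D (Φ t)
    have i2 := hot_contr hΛp hΛnorm y
    have i3 := hot_frob (P * B) (Λ *ᵥ y)
    have i4 : y ⬝ᵥ Λ *ᵥ w = e t ⬝ᵥ (P * B) *ᵥ Λ *ᵥ y := by
      rw [← swap y, ← mulVec_mulVec y, ← mulVec_mulVec (Λ *ᵥ y)]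
    set z := (P * B) *ᵥ Λ *ᵥ y with hz
    have i5 : 4 * (e t ⬝ᵥ z) ≤ e t ⬝ᵥ e t + 4 * (z ⬝ᵥ z) := by
      simp only [dotProduct, Finset.mul_sum]
      rw [← Finset.sum_add_distrib]
      refine Finset.sum_le_sum fun i _ => ?_
      nlinarith [sq_nonneg (e t i - 2 * z i)]
    have i6 : 2 * (e t ⬝ᵥ e t) ≤ q := by
      have := hot_psd hQ2 (e t)
      rw [sub_mulVec, dotProduct_sub, smul_mulVec, one_mulVec, dotProduct_smul, smul_eq_mul] at this
      linarith
    have i7 : z ⬝ᵥ z ≤ F * (τ * φ) :=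
      i3.trans (mul_le_mul_of_nonneg_left (i2.trans i1) hFnn)
    have i8 : 4 * F ≤ 2 * β / γ * μ := by
      have h := mul_le_mul_of_nonneg_left hμ (by positivity : 0 ≤ 2 * β / γ)
      have h' : 2 * β / γ * (2 * γ / β * F) = 4 * F := by field_simp; ring
      linarith
    have i9 : 4 * F * (τ * φ) ≤ 2 * β / γ * μ * (τ * φ) :=
      mul_le_mul_of_nonneg_right i8 (by positivity)
    have i10 : 0 ≤ 2 * β / γ * τ := by positivity
    rw [i4]
    have e1 : 1 / γ * (-2 * γ * (X *ᵥ Φ t ⬝ᵥ Λ *ᵥ w)) = -2 * (X *ᵥ Φ t ⬝ᵥ Λ *ᵥ w) := by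
      field_simp
    have e2 : 1 / γ * (-2 * β * c * τ + 2 * γ * (e t ⬝ᵥ z)) =
        -(2 * β / γ * τ) - 2 * β / γ * μ * (τ * φ) + 2 * (e t ⬝ᵥ z) := by
      rw [hc]; field_simp; ring
    rw [e1, e2]
    linarith
  intro T hT
  choose! d hd hdle using hVd
  have hcont : ContinuousOn (fun τ => e τ ⬝ᵥ Q *ᵥ e τ) (Set.Icc 0 T) := by
    have hce : ContinuousOn e (Set.Icc 0 T) := fun t ht =>
      (he t ht.1).continuousAt.continuousWithinAt
    have : Continuous (fun x : Fin n → ℝ => x ⬝ᵥ Q *ᵥ x) := by fun_prop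
    exact this.comp_continuousOn hce
  have key := intervalIntegral.integral_le_sub_of_hasDeriv_right_of_le
    (g := fun t => -2 * V t) (g' := fun t => -2 * d t) (φ := fun τ => e τ ⬝ᵥ Q *ᵥ e τ) hT.le
    (fun t ht => ((hd t ht.1).const_mul (-2)).continuousAt.continuousWithinAt)
    (fun t ht => ((hd t ht.1.le).const_mul (-2)).hasDerivWithinAt)
    hcont.integrableOn_Icc
    (fun t ht => by have := hdle t ht.1.le; linarith)
  have := hVnn T
  change _ ≤ 2 * V 0
  linarith
end

section
/- (Lemma 1.) For every pair ε₁ > ε₂ > 0 there exists n = n(ε₁, ε₂) > 0 (depending only on ε₁, ε₂ and the fixed system data) such that for every solution of the scalar-input high-order-tuner system on [t₁,∞) with ‖z(t₁)‖ ≤ ε₁, the set S = {t ∈ [t₁,∞) : ‖x₁(t)‖ > ε₂} has Lebesgue measure at most n. -/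
open Matrix MeasureTheory Filter intervalIntegral

theorem hot_meas_bound (V V' g : ℝ → ℝ) (t₁ K κ ε : ℝ) (hκ : 0 < κ) (hε : 0 < ε)
    (hV : ∀ t, t₁ ≤ t → HasDerivAt V (V' t) t)
    (hV' : ∀ t, t₁ ≤ t → V' t ≤ -(κ * g t))
    (hg : ContinuousOn g (Set.Ici t₁)) (hg0 : ∀ t, 0 ≤ g t)
    (hV0 : ∀ t, 0 ≤ V t) (hK : V t₁ ≤ K) :
    volume {t : ℝ | t₁ ≤ t ∧ ε < g t} ≤ ENNReal.ofReal (K / (κ * ε)) := by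
  have key : ∀ T, t₁ ≤ T → volume ({t : ℝ | t₁ ≤ t ∧ ε < g t} ∩ Set.Icc t₁ T)
      ≤ ENNReal.ofReal (K / (κ * ε)) := by
    intro T hT
    have hgc : ContinuousOn g (Set.Icc t₁ T) := hg.mono Set.Icc_subset_Ici_self
    have hgi : IntegrableOn g (Set.Icc t₁ T) := hgc.integrableOn_Icc
    have h1 := sub_le_integral_of_hasDeriv_right_of_le (g := V) (g' := V')
      (φ := fun t => -(κ * g t)) hT
      (fun t ht => (hV t ht.1).continuousAt.continuousWithinAt)
      (fun t ht => (hV t ht.1.le).hasDerivWithinAt)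
      ((hgi.const_mul κ).neg) (fun t ht => hV' t ht.1.le)
    rw [intervalIntegral.integral_neg, intervalIntegral.integral_const_mul,
      intervalIntegral.integral_of_le hT, ← integral_Icc_eq_integral_Ioc] at h1
    have h2 := mul_meas_ge_le_integral_of_nonneg (μ := volume.restrict (Set.Icc t₁ T)) (f := g)
      (Eventually.of_forall hg0) hgi ε
    have h3 : volume ({t : ℝ | t₁ ≤ t ∧ ε < g t} ∩ Set.Icc t₁ T) ≤
        volume.restrict (Set.Icc t₁ T) {t | ε ≤ g t} := by
      rw [Measure.restrict_apply' measurableSet_Icc]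
      exact measure_mono (fun t ht => ⟨ht.1.2.le, ht.2⟩)
    refine h3.trans ?_
    have hfin : volume.restrict (Set.Icc t₁ T) {t | ε ≤ g t} ≠ ⊤ := measure_ne_top _ _
    rw [← ENNReal.ofReal_toReal hfin]
    apply ENNReal.ofReal_le_ofReal
    rw [le_div_iff₀ (by positivity)]
    have h4 := hV0 T
    simp only [measureReal_def] at h2
    have h5 := mul_le_mul_of_nonneg_left h2 hκ.le
    linarith
  have hU : {t : ℝ | t₁ ≤ t ∧ ε < g t} =
      ⋃ k : ℕ, ({t : ℝ | t₁ ≤ t ∧ ε < g t} ∩ Set.Icc t₁ (t₁ + k)) := by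
    ext t
    simp only [Set.mem_iUnion, Set.mem_inter_iff, Set.mem_Icc]
    constructor
    · intro h
      obtain ⟨k, hk⟩ := exists_nat_ge (t - t₁)
      exact ⟨k, h, h.1, by linarith⟩
    · rintro ⟨k, h, _⟩
      exact h
  rw [hU, Monotone.measure_iUnion]
  · exact iSup_le fun k => key _ (by simp)
  · intro a b hab
    apply Set.inter_subset_inter_right
    apply Set.Icc_subset_Icc_right
    have : (a : ℝ) ≤ b := by exact_mod_cast hab
    linarith

theorem hot_deriv_dot {m : ℕ} {f g : ℝ → Fin m → ℝ} {f' g' : Fin m → ℝ} {t : ℝ}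
    (hf : HasDerivAt f f' t) (hg : HasDerivAt g g' t) :
    HasDerivAt (fun s => f s ⬝ᵥ g s) (f' ⬝ᵥ g t + f t ⬝ᵥ g') t := by
  rw [hasDerivAt_pi] at hf hg
  have h := HasDerivAt.fun_sum (u := Finset.univ) (fun i _ => (hf i).mul (hg i))
  simp only [dotProduct, ← Finset.sum_add_distrib]
  exact h

theorem hot_deriv_mulVec {m : ℕ} (P : Matrix (Fin m) (Fin m) ℝ) {f : ℝ → Fin m → ℝ}
    {f' : Fin m → ℝ} {t : ℝ} (hf : HasDerivAt f f' t) :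
    HasDerivAt (fun s => P.mulVec (f s)) (P.mulVec f') t := by
  rw [hasDerivAt_pi]
  intro i
  have h := hot_deriv_dot (hasDerivAt_const t (P i)) hf
  simpa [mulVec] using h

theorem hot_dot_nonneg {m : ℕ} (x : Fin m → ℝ) : 0 ≤ x ⬝ᵥ x :=
  Finset.sum_nonneg fun i _ => mul_self_nonneg (x i)

theorem hot_cs_s12 {m : ℕ} (x y : Fin m → ℝ) : (x ⬝ᵥ y) ^ 2 ≤ (x ⬝ᵥ x) * (y ⬝ᵥ y) := by
  have := Finset.sum_mul_sq_le_sq_mul_sq Finset.univ x y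
  simpa [dotProduct, sq] using this

theorem hot_quad {m : ℕ} (P : Matrix (Fin m) (Fin m) ℝ) (x : Fin m → ℝ) :
    x ⬝ᵥ P.mulVec x ≤ (∑ i, ∑ j, |P i j|) * (x ⬝ᵥ x) := by
  have h0 : x ⬝ᵥ P.mulVec x = ∑ i, ∑ j, x i * (P i j * x j) := by
    simp only [mulVec, dotProduct, Finset.mul_sum]
  rw [h0, Finset.sum_mul]
  refine Finset.sum_le_sum fun i _ => ?_
  rw [Finset.sum_mul]
  refine Finset.sum_le_sum fun j _ => ?_
  have hi : x i * x i ≤ x ⬝ᵥ x :=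
    Finset.single_le_sum (f := fun k => x k * x k) (fun k _ => mul_self_nonneg _) (Finset.mem_univ i)
  have hj : x j * x j ≤ x ⬝ᵥ x :=
    Finset.single_le_sum (f := fun k => x k * x k) (fun k _ => mul_self_nonneg _) (Finset.mem_univ j)
  have hij : |x i * x j| ≤ x ⬝ᵥ x := by
    rw [abs_le]
    constructor <;> nlinarith [sq_nonneg (x i - x j), sq_nonneg (x i + x j)]
  calc x i * (P i j * x j) = P i j * (x i * x j) := by ring
    _ ≤ |P i j * (x i * x j)| := le_abs_self _
    _ = |P i j| * |x i * x j| := abs_mul _ _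
    _ ≤ _ := mul_le_mul_of_nonneg_left hij (abs_nonneg _)

/-- The scalar inequality behind the Lyapunov estimate. -/
theorem hot_scalar (q E W F b p r Λ γ β μ : ℝ) (hΛ0 : 0 < Λ) (hΛ1 : Λ ≤ 1)
    (hγ : 0 < γ) (hβ : 0 < β) (hμ : 2 * γ * b / β ≤ μ)
    (hE : 0 ≤ E) (hW : 0 ≤ W) (hF : 0 ≤ F) (hb : 0 ≤ b)
    (hq : 2 * E ≤ q) (hp : p ^ 2 ≤ E * b) (hr : r ^ 2 ≤ W * F) :
    -q + 4 * Λ * (p * r) - 2 * (Λ / γ) * β * (1 + μ * F) * W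
      ≤ -(min 1 (2 * (Λ / γ) * β) * (E + W)) := by
  have h1 : 2 * b ≤ β * μ / γ := by
    rw [le_div_iff₀ hγ]
    rw [div_le_iff₀ hβ] at hμ
    linarith
  have h2 : 4 * (p * r) ≤ E + 4 * (b * (W * F)) := by
    have hpr : (p * r) ^ 2 ≤ E * (b * (W * F)) := by
      have := mul_le_mul hp hr (sq_nonneg r) (by positivity)
      nlinarith
    have h0 : 0 ≤ b * (W * F) := by positivity
    apply le_of_abs_le; apply abs_le_of_sq_le_sq _ (by positivity)
    nlinarith [sq_nonneg (E - 4 * (b * (W * F)))]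
  have h3 : Λ * (4 * (p * r)) ≤ Λ * (E + 4 * (b * (W * F))) := mul_le_mul_of_nonneg_left h2 hΛ0.le
  have h4 : Λ * E ≤ E := by nlinarith
  have h5 : 2 * b * (2 * Λ * (W * F)) ≤ β * μ / γ * (2 * Λ * (W * F)) :=
    mul_le_mul_of_nonneg_right h1 (by positivity)
  have h6 : 2 * (Λ / γ) * β * (1 + μ * F) * W =
      2 * (Λ / γ) * β * W + β * μ / γ * (2 * Λ * (W * F)) := by
    field_simp
  have h7 := mul_le_mul_of_nonneg_right (min_le_left 1 (2 * (Λ / γ) * β)) hE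
  have h8 := mul_le_mul_of_nonneg_right (min_le_right 1 (2 * (Λ / γ) * β)) hW
  nlinarith

/-- Lemma 1. For every `ε₁ > ε₂ > 0` there exists `n(ε₁,ε₂) > 0`
such that for every solution with `‖z(t₁)‖ ≤ ε₁`, the set
`S = {t ≥ t₁ : ‖x₁(t)‖ > ε₂}` has Lebesgue measure at most `n(ε₁,ε₂)`. -/
theorem scalar_hot_lemma1
    (n N : ℕ)
    (AH : Matrix (Fin n) (Fin n) ℝ) (B : Fin n → ℝ)
    (Λ : ℝ) (hΛ0 : 0 < Λ) (hΛ1 : Λ ≤ 1)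
    (Q P : Matrix (Fin n) (Fin n) ℝ)
    (hQ : Q.PosDef) (hP : P.PosDef)
    (hLyap : AHᵀ * P + P * AH = -Q)
    (hQ2 : (Q - (2 : ℝ) • 1).PosSemidef)
    (γ β μ : ℝ) (hγ : 0 < γ) (hβ : 0 < β)
    (hμ : 2 * γ * (P.mulVec B ⬝ᵥ P.mulVec B) / β ≤ μ)
    (t₀ : ℝ)
    (Φ : ℝ → Fin N → ℝ)
    (hΦcont : ContinuousOn Φ (Set.Ici t₀))
    (hΦbdd : ∃ C, ∀ t ∈ Set.Ici t₀, Real.sqrt (∑ j, Φ t j ^ 2) ≤ C)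
    : ∀ ε₁ ε₂ : ℝ, 0 < ε₂ → ε₂ < ε₁ →
      ∃ nb > (0 : ℝ), ∀ t₁, t₀ ≤ t₁ → ∀ e : ℝ → Fin n → ℝ, ∀ θ ϑ : ℝ → Fin N → ℝ,
      (∀ t ∈ Set.Ici t₁, HasDerivAt e (AH.mulVec (e t) + (θ t ⬝ᵥ Φ t) • (Λ • B)) t) →
      (∀ t ∈ Set.Ici t₁, HasDerivAt ϑ ((-γ * (e t ⬝ᵥ P.mulVec B)) • Φ t) t) →
      (∀ t ∈ Set.Ici t₁, HasDerivAt θ ((-β * (1 + μ * (Φ t ⬝ᵥ Φ t))) • (θ t - ϑ t)) t) →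
      Real.sqrt (e t₁ ⬝ᵥ e t₁ + (θ t₁ - ϑ t₁) ⬝ᵥ (θ t₁ - ϑ t₁) + ϑ t₁ ⬝ᵥ ϑ t₁) ≤ ε₁ →
      volume {t : ℝ | t₁ ≤ t ∧
        ε₂ < Real.sqrt (e t ⬝ᵥ e t + (θ t - ϑ t) ⬝ᵥ (θ t - ϑ t))} ≤ ENNReal.ofReal nb := by
  intro ε₁ ε₂ hε₂ hε
  have hε₁ : 0 < ε₁ := hε₂.trans hε
  set M : ℝ := ∑ i, ∑ j, |P i j| with hM
  have hM0 : 0 ≤ M := Finset.sum_nonneg fun i _ => Finset.sum_nonneg fun j _ => abs_nonneg _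
  have hc : 0 < Λ / γ := by positivity
  have hκ : 0 < min 1 (2 * (Λ / γ) * β) := by positivity
  refine ⟨((M + Λ / γ) * ε₁ ^ 2) / (min 1 (2 * (Λ / γ) * β) * ε₂ ^ 2), by positivity, ?_⟩
  intro t₁ ht₁ e θ ϑ he hϑ hθ hz
  have hPt : Pᵀ = P := by simpa using hP.isHermitian.eq
  have hsym : ∀ x y : Fin n → ℝ, x ⬝ᵥ P.mulVec y = y ⬝ᵥ P.mulVec x := by
    intro x y
    rw [dotProduct_mulVec, ← mulVec_transpose, hPt, dotProduct_comm]
  have hset : {t : ℝ | t₁ ≤ t ∧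
        ε₂ < Real.sqrt (e t ⬝ᵥ e t + (θ t - ϑ t) ⬝ᵥ (θ t - ϑ t))} =
      {t : ℝ | t₁ ≤ t ∧ ε₂ ^ 2 < e t ⬝ᵥ e t + (θ t - ϑ t) ⬝ᵥ (θ t - ϑ t)} := by
    ext t
    simp only [Set.mem_setOf_eq, Real.lt_sqrt hε₂.le]
  rw [hset]
  have hw : ∀ t, t₁ ≤ t → HasDerivAt (fun s => θ s - ϑ s) _ t :=
    fun t ht => (hθ t ht).fun_sub (hϑ t ht)
  have hee := fun t ht => hot_deriv_dot (he t ht) (he t ht)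
  have hww := fun t ht => hot_deriv_dot (hw t ht) (hw t ht)
  have hPe := fun t ht => hot_deriv_dot (he t ht) (hot_deriv_mulVec P (he t ht))
  have hvv := fun t ht => hot_deriv_dot (hϑ t ht) (hϑ t ht)
  have hV := fun t (ht : t₁ ≤ t) => ((hPe t ht).fun_add ((hww t ht).const_mul (Λ / γ))).fun_add
    ((hvv t ht).const_mul (Λ / γ))
  refine hot_meas_bound _ _ (fun t => e t ⬝ᵥ e t + (θ t - ϑ t) ⬝ᵥ (θ t - ϑ t)) t₁ _ _ _ hκ
    (by positivity) hV ?_ ?_ ?_ ?_ ?_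
  · intro t ht
    have hq : 2 * (e t ⬝ᵥ e t) ≤ e t ⬝ᵥ Q.mulVec (e t) := by
      have := hQ2.dotProduct_mulVec_nonneg (e t)
      simp [sub_mulVec, smul_mulVec, dotProduct_sub] at this
      linarith
    have h := hot_scalar (e t ⬝ᵥ Q.mulVec (e t)) (e t ⬝ᵥ e t) ((θ t - ϑ t) ⬝ᵥ (θ t - ϑ t))
      (Φ t ⬝ᵥ Φ t) (P.mulVec B ⬝ᵥ P.mulVec B) (e t ⬝ᵥ P.mulVec B) ((θ t - ϑ t) ⬝ᵥ Φ t)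
      Λ γ β μ hΛ0 hΛ1 hγ hβ hμ (hot_dot_nonneg _) (hot_dot_nonneg _) (hot_dot_nonneg _)
      (hot_dot_nonneg _) hq (hot_cs_s12 _ _) (hot_cs_s12 _ _)
    refine le_of_eq_of_le ?_ h
    have hA : AH.mulVec (e t) ⬝ᵥ P.mulVec (e t) + e t ⬝ᵥ P.mulVec (AH.mulVec (e t))
        = -(e t ⬝ᵥ Q.mulVec (e t)) := by
      have h1 : AH.mulVec (e t) ⬝ᵥ P.mulVec (e t) = e t ⬝ᵥ (AHᵀ * P).mulVec (e t) := by
        rw [← mulVec_mulVec, dotProduct_mulVec (e t), vecMul_transpose]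
      rw [h1, mulVec_mulVec, ← dotProduct_add, ← add_mulVec, hLyap, neg_mulVec, dotProduct_neg]
    have hB : B ⬝ᵥ P.mulVec (e t) = e t ⬝ᵥ P.mulVec B := hsym _ _
    have hθe : θ t = (θ t - ϑ t) + ϑ t := by simp
    have hs : θ t ⬝ᵥ Φ t = (θ t - ϑ t) ⬝ᵥ Φ t + ϑ t ⬝ᵥ Φ t := by
      rw [← add_dotProduct]; simp
    rw [hs]
    generalize θ t - ϑ t = w
    simp only [add_dotProduct, mulVec_add, mulVec_smul, dotProduct_add, smul_dotProduct,
      dotProduct_smul, smul_eq_mul, sub_dotProduct, dotProduct_sub, hB,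
      dotProduct_comm (Φ t) w, dotProduct_comm (Φ t) (ϑ t)]
    rw [← sub_eq_zero]
    have hA' := sub_eq_zero.mpr hA
    generalize AH.mulVec (e t) ⬝ᵥ P.mulVec (e t) = a1 at *
    generalize e t ⬝ᵥ P.mulVec (AH.mulVec (e t)) = a2 at *
    have : e t ⬝ᵥ Q.mulVec (e t) = -(a1 + a2) := by linarith
    rw [this]
    field_simp
    ring
  · intro t ht
    exact ((hee t ht).continuousAt.add (hww t ht).continuousAt).continuousWithinAt
  · intro t
    exact add_nonneg (hot_dot_nonneg _) (hot_dot_nonneg _)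
  · intro t
    have h1 : 0 ≤ e t ⬝ᵥ P.mulVec (e t) := by
      simpa using hP.posSemidef.dotProduct_mulVec_nonneg (e t)
    have h2 := mul_nonneg hc.le (hot_dot_nonneg (θ t - ϑ t))
    have h3 := mul_nonneg hc.le (hot_dot_nonneg (ϑ t))
    exact add_nonneg (add_nonneg h1 h2) h3
  · have h1 := hot_quad P (e t₁)
    rw [← hM] at h1
    have h2 := hot_dot_nonneg (θ t₁ - ϑ t₁)
    have h3 := hot_dot_nonneg (ϑ t₁)
    have h4 := hot_dot_nonneg (e t₁)
    have h5 := (Real.sqrt_le_left hε₁.le).mp hz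
    have h6 := mul_le_mul_of_nonneg_left h5 (by positivity : 0 ≤ M + Λ / γ)
    have h7 := mul_nonneg hM0 h2
    have h8 := mul_nonneg hM0 h3
    have h9 := mul_nonneg hc.le h4
    linarith
end
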